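/- Define p_k = k(k+1)/2 + 1 for k ≥ 0, and define p̃_1 = 2 and, for k ≥ 2, p̃_k = k(k+1)/2 + 1 if k ≡ 1 or 2 (mod 4) and p̃_k = k(k+1)/2 if k ≡ 0 or 3 (mod 4). Then for each n ≥ 2: (1) 2 ≤ p̃_n ≤ p_n; (2) p̃_n ≤ p̃_{n+1}; (3) p̃_n / p̃_{n−1} ≤ 2; (4) for every 1 ≤ k ≤ n, if p_n / p̃_k > 2 then p_n / p̃_k ≤ p_{n−k}. -/

import Mathlib

/-!
Write `T k = k (k + 1) / 2`. For `k ≥ 2` the number `pT k` is either `T k` or `T k + 1`, and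
`pE k = T k + 1`. These two-sided bounds give bounds and monotonicity at once, and the ratio bound
for `n ≥ 4`; the cases `n = 2, 3` of the latter use the exact values `2, 4, 6`.

For the last part put `m = n - k`. If `m = 0`, the ratio `pE k / pT k` is at most `2`, so there is
nothing to prove. If `m ≥ 1`, the inequality `pE (k + m) ≤ pT k * pE m` always holds:
for `k ≥ 3` it is implied by `(T k - 1) * T m ≥ k * m + 1`, because
`pE (k + m) = T k + T m + k * m + 1`, while `k = 1, 2` are checked with the exact values of `pT k`.
-/

noncomputable section

/-- `p_k = k(k+1)/2 + 1`. -/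
def pE (k : ℕ) : ℚ := (k : ℚ) * (k + 1) / 2 + 1

/-- `p̃_1 = 2`, and for `k ≥ 2`: `p̃_k = k(k+1)/2 + 1` if `k ≡ 1, 2 (mod 4)`,
`p̃_k = k(k+1)/2` if `k ≡ 0, 3 (mod 4)`. -/
def pT (k : ℕ) : ℚ :=
  if k ≤ 1 then 2
  else if k % 4 = 1 ∨ k % 4 = 2 then (k : ℚ) * (k + 1) / 2 + 1
  else (k : ℚ) * (k + 1) / 2

theorem pT_lower (k : ℕ) (hk : 1 ≤ k) : (k : ℚ) * (k + 1) / 2 ≤ pT k := by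
  unfold pT
  split_ifs with h
  · obtain rfl : k = 1 := by omega
    norm_num
  · linarith
  · exact le_rfl

theorem pT_upper (k : ℕ) (hk : 1 ≤ k) : pT k ≤ pE k := by
  unfold pT pE
  split_ifs with h
  · obtain rfl : k = 1 := by omega
    norm_num
  · exact le_rfl
  · linarith

theorem pT_one : pT 1 = 2 := by norm_num [pT]

theorem pT_two : pT 2 = 4 := by norm_num [pT]

theorem pT_three : pT 3 = 6 := by norm_num [pT]

theorem two_le_pT (k : ℕ) (hk : 1 ≤ k) : 2 ≤ pT k := by
  rcases hk.eq_or_lt with rfl | h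
  · rw [pT_one]
  · have h2 : (2 : ℚ) ≤ k := by exact_mod_cast h
    nlinarith [pT_lower k hk]

/-- The hypothesis `1 ≤ m` is needed: the inequality can fail for `m = 0`,
since `pE 0 = 1` and `pT k` may be less than `pE k`. -/
theorem pE_add_le (k m : ℕ) (hk : 1 ≤ k) (hm : 1 ≤ m) : pE (k + m) ≤ pT k * pE m := by
  have hm' : (1 : ℚ) ≤ m := by exact_mod_cast hm
  obtain rfl | rfl | h3 : k = 1 ∨ k = 2 ∨ 3 ≤ k := by omega
  · rw [pT_one]
    unfold pE
    push_cast
    nlinarith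
  · rw [pT_two]
    unfold pE
    push_cast
    nlinarith
  · have hk' : (3 : ℚ) ≤ k := by exact_mod_cast h3
    have hpos : 0 ≤ pE m := by unfold pE; positivity
    refine le_trans ?_ (mul_le_mul_of_nonneg_right (pT_lower k hk) hpos)
    unfold pE
    push_cast
    obtain ⟨a, ha, hka⟩ : ∃ a : ℚ, 0 ≤ a ∧ (k : ℚ) = a + 3 := ⟨k - 3, by linarith, by ring⟩
    obtain ⟨b, hb, hmb⟩ : ∃ b : ℚ, 0 ≤ b ∧ (m : ℚ) = b + 1 := ⟨m - 1, by linarith, by ring⟩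
    rw [hka, hmb]
    -- After the shifts, the difference of the two sides has nonnegative coefficients.
    rw [← sub_nonneg]
    ring_nf
    positivity

/-- Lemma `pprops`: properties of the sequences `p_k`, `p̃_k`. -/
theorem statement8 (n : ℕ) (hn : 2 ≤ n) :
    (2 ≤ pT n ∧ pT n ≤ pE n) ∧
    (pT n ≤ pT (n + 1)) ∧
    (pT n / pT (n - 1) ≤ 2) ∧
    (∀ k : ℕ, 1 ≤ k → k ≤ n → 2 < pE n / pT k → pE n / pT k ≤ pE (n - k)) := by
  have hn' : (2 : ℚ) ≤ n := by exact_mod_cast hn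
  refine ⟨⟨two_le_pT n (by omega), pT_upper n (by omega)⟩, ?_, ?_, ?_⟩
  · have h1 := pT_upper n (by omega)
    have h2 := pT_lower (n + 1) (by omega)
    unfold pE at h1
    push_cast at h2
    nlinarith
  · rw [div_le_iff₀ (by linarith [two_le_pT (n - 1) (by omega)])]
    obtain rfl | rfl | h4 : n = 2 ∨ n = 3 ∨ 4 ≤ n := by omega
    · norm_num [pT_one, pT_two]
    · norm_num [pT_two, pT_three]
    · have h1 := pT_upper n (by omega)
      have h2 := pT_lower (n - 1) (by omega)
      have h4' : (4 : ℚ) ≤ n := by exact_mod_cast h4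
      unfold pE at h1
      rw [Nat.cast_sub (by omega)] at h2
      push_cast at h2
      nlinarith
  · intro k hk hkn hlt
    have h2 := two_le_pT k hk
    obtain ⟨m, rfl⟩ := Nat.exists_eq_add_of_le hkn
    rw [Nat.add_sub_cancel_left]
    rcases Nat.eq_zero_or_pos m with rfl | hm
    · rw [lt_div_iff₀ (by linarith)] at hlt
      have h1 := pT_lower k hk
      unfold pE at hlt
      push_cast at hlt
      linarith
    · rw [div_le_iff₀ (by linarith), mul_comm]
      exact pE_add_le k m hk hm
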